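/- Let (X,T) be a uniquely ergodic t.d.s. whose unique invariant Borel probability measure μ makes (X,ℬ(X),μ,T) weakly mixing, and let d ∈ ℕ. Then: (1) the action of the parallelepiped group G^{[d]} on X^{[d]} = X^{2^d} is uniquely ergodic, and its unique invariant measure is the 2^d-fold product measure μ×···×μ; (2) the action of the face group F^{[d]} on X^{[d]}_* = X^{2^d−1} (coordinates indexed by nonzero ε ∈ {0,1}^d) is uniquely ergodic, and its unique invariant measure is the (2^d−1)-fold product measure μ×···×μ. -/

import Mathlib

open MeasureTheory Topology Filter

namespace HSY

/-- The group structure on self-homeomorphisms of a topological space,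
with `a * b = b.trans a` (i.e. composition `a ∘ b`). -/
instance homeoGroup (X : Type*) [TopologicalSpace X] : Group (X ≃ₜ X) where
  mul a b := b.trans a
  one := Homeomorph.refl X
  inv := Homeomorph.symm
  mul_assoc a b c := rfl
  one_mul a := by ext x; rfl
  mul_one a := by ext x; rfl
  inv_mul_cancel a := by
    show a.trans a.symm = Homeomorph.refl X
    ext x; exact a.symm_apply_apply x

/-- The `j`-th face transformation of dimension `d`: it applies `S` to the coordinates `ε`
with `ε j = 1` and leaves the other coordinates unchanged. -/
def faceHomeo {Y : Type*} [TopologicalSpace Y] (S : Y ≃ₜ Y) {d : ℕ} (j : Fin d) :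
    ((Fin d → Bool) → Y) ≃ₜ ((Fin d → Bool) → Y) :=
  Homeomorph.piCongrRight fun ε => if ε j then S else Homeomorph.refl Y

/-- The generators of the face group `F^[d]`. -/
def faceGens {Y : Type*} [TopologicalSpace Y] (S : Y ≃ₜ Y) (d : ℕ) :
    Set (((Fin d → Bool) → Y) ≃ₜ ((Fin d → Bool) → Y)) :=
  Set.range fun j : Fin d => faceHomeo S j

/-- The diagonal transformation `S × ⋯ × S` of dimension `d`. -/
def diagHomeo {Y : Type*} [TopologicalSpace Y] (S : Y ≃ₜ Y) (d : ℕ) :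
    ((Fin d → Bool) → Y) ≃ₜ ((Fin d → Bool) → Y) :=
  Homeomorph.piCongrRight fun _ => S

/-- The generators of the parallelepiped group `G^[d]` : the face transformations together
with the diagonal transformation. -/
def parallelepipedGens {Y : Type*} [TopologicalSpace Y] (S : Y ≃ₜ Y) (d : ℕ) :
    Set (((Fin d → Bool) → Y) ≃ₜ ((Fin d → Bool) → Y)) :=
  insert (diagHomeo S d) (faceGens S d)

/-- The dynamical parallelepiped `Q^[d]`, the closure of the set of points
`(S^(n·ε) y)_{ε ∈ {0,1}^d}`. -/
def Qset {Y : Type*} [TopologicalSpace Y] (S : Y ≃ₜ Y) (d : ℕ) : Set ((Fin d → Bool) → Y) :=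
  closure {c | ∃ (n : Fin d → ℤ) (y : Y),
    c = fun ε => (S ^ (∑ i, if ε i then n i else 0)) y}

/-- The nonzero elements of `{0,1}^d`. -/
def starIndex (d : ℕ) := {ε : Fin d → Bool // ε ≠ fun _ => false}

instance (d : ℕ) : Fintype (starIndex d) := by unfold starIndex; infer_instance

/-- The `j`-th face transformation of dimension `d` acting on `X^[d]_* = X^{2^d - 1}`. -/
def faceHomeoStar {Y : Type*} [TopologicalSpace Y] (S : Y ≃ₜ Y) {d : ℕ} (j : Fin d) :
    (starIndex d → Y) ≃ₜ (starIndex d → Y) :=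
  Homeomorph.piCongrRight fun ε => if ε.1 j then S else Homeomorph.refl Y

/-- The generators of the face group `F^[d]` acting on `X^[d]_*`. -/
def faceGensStar {Y : Type*} [TopologicalSpace Y] (S : Y ≃ₜ Y) (d : ℕ) :
    Set ((starIndex d → Y) ≃ₜ (starIndex d → Y)) :=
  Set.range fun j : Fin d => faceHomeoStar S j

/-- **Mean ergodic theorem for sets**: along an ergodic transformation, the measures
`m (S⁻ⁿ A ∩ B)` converge to `m A * m B` in the Cesàro sense. -/
theorem tendsto_average_measureReal_inter {Ω : Type*} [MeasurableSpace Ω] {S : Ω → Ω}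
    {m : Measure Ω} [IsProbabilityMeasure m] (hS : Ergodic S m) {A B : Set Ω}
    (hA : MeasurableSet A) (hB : MeasurableSet B) :
    Tendsto (fun N : ℕ => (N : ℝ)⁻¹ * ∑ n ∈ Finset.range N, m.real (S^[n] ⁻¹' A ∩ B)) atTop
      (𝓝 (m.real A * m.real B)) := by
  have hmp : MeasurePreserving S m m := hS.toMeasurePreserving
  set U : Lp ℝ 2 m →L[ℝ] Lp ℝ 2 m :=
    (Lp.compMeasurePreservingₗᵢ ℝ S hmp).toContinuousLinearMap
  have hUnorm : ‖U‖ ≤ 1 := LinearIsometry.norm_toContinuousLinearMap_le _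
  set x : Lp ℝ 2 m := indicatorConstLp 2 hA (measure_ne_top m A) (1 : ℝ)
  have hlim := U.tendsto_birkhoffAverage_orthogonalProjection hUnorm x
  set y : U.eqLocus (1 : Lp ℝ 2 m →L[ℝ] Lp ℝ 2 m) :=
    (U.eqLocus (1 : Lp ℝ 2 m →L[ℝ] Lp ℝ 2 m)).orthogonalProjectionOnto x
  have hy : U y = y := y.2
  obtain ⟨c, hc⟩ : ∃ c : ℝ, (y : Lp ℝ 2 m) =ᵐ[m] Function.const Ω c := by
    refine hS.ae_eq_const_of_ae_eq_comp_ae (Lp.aestronglyMeasurable _) ?_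
    have h := Lp.coeFn_compMeasurePreserving (y : Lp ℝ 2 m) hmp
    have h' : Lp.compMeasurePreserving S hmp (y : Lp ℝ 2 m) = y := hy
    rw [h'] at h
    exact h.symm
  have key : ∀ C : Set Ω, MeasurableSet C →
      Tendsto (fun N : ℕ => (N : ℝ)⁻¹ * ∑ n ∈ Finset.range N, m.real (S^[n] ⁻¹' A ∩ C)) atTop
        (𝓝 (c * m.real C)) := by
    intro C hC
    set z : Lp ℝ 2 m := indicatorConstLp 2 hC (measure_ne_top m C) (1 : ℝ) with hz
    have h1 : Tendsto (fun N : ℕ => inner ℝ z (birkhoffAverage ℝ U id N x)) atTop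
        (𝓝 (inner ℝ z (y : Lp ℝ 2 m))) := tendsto_const_nhds.inner hlim
    have h2 : inner ℝ z (y : Lp ℝ 2 m) = c * m.real C := by
      rw [hz, L2.inner_indicatorConstLp_one, setIntegral_congr_ae (g := fun _ => c) hC
        (hc.mono fun _ h _ => h)]
      simp [mul_comm]
    rw [h2] at h1
    refine h1.congr fun N => ?_
    rw [birkhoffAverage, birkhoffSum, real_inner_smul_right, inner_sum]
    congr 1
    refine Finset.sum_congr rfl fun n _ => ?_
    have h3 : U^[n] x = indicatorConstLp 2 (hA.preimage (hmp.iterate n).measurable)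
        (measure_ne_top m _) (1 : ℝ) := by
      have : (U : Lp ℝ 2 m → Lp ℝ 2 m) = Lp.compMeasurePreserving S hmp := rfl
      rw [this, Lp.compMeasurePreserving_iterate]
      rfl
    rw [id, h3, hz, L2.real_inner_indicatorConstLp_one_indicatorConstLp_one, Set.inter_comm]
  have hcA : c = m.real A := by
    have h1 := key Set.univ MeasurableSet.univ
    have h2 : Tendsto (fun N : ℕ =>
        (N : ℝ)⁻¹ * ∑ n ∈ Finset.range N, m.real (S^[n] ⁻¹' A ∩ Set.univ)) atTop
        (𝓝 (m.real A)) := by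
      refine tendsto_const_nhds.congr' ?_
      filter_upwards [eventually_ge_atTop 1] with N hN
      have hN' : (N : ℝ) ≠ 0 := by positivity
      have : ∀ n, m.real (S^[n] ⁻¹' A ∩ Set.univ) = m.real A := fun n => by
        rw [Set.inter_univ, (hmp.iterate n).measureReal_preimage hA.nullMeasurableSet]
      simp only [this, Finset.sum_const, Finset.card_range, nsmul_eq_mul]
      field_simp
    simpa using tendsto_nhds_unique h1 h2
  simpa [hcA] using key B hB

/-- `u n` converges to `c` in mean square along Cesàro averages. -/
def CesaroSq (u : ℕ → ℝ) (c : ℝ) : Prop :=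
  Tendsto (fun N : ℕ => (N : ℝ)⁻¹ * ∑ n ∈ Finset.range N, (u n - c) ^ 2) atTop (𝓝 0)

namespace CesaroSq

theorem const (c : ℝ) : CesaroSq (fun _ => c) c := by
  simp [CesaroSq]

theorem of_average {u : ℕ → ℝ} {c : ℝ}
    (h₁ : Tendsto (fun N : ℕ => (N : ℝ)⁻¹ * ∑ n ∈ Finset.range N, u n) atTop (𝓝 c))
    (h₂ : Tendsto (fun N : ℕ => (N : ℝ)⁻¹ * ∑ n ∈ Finset.range N, u n ^ 2) atTop (𝓝 (c ^ 2))) :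
    CesaroSq u c := by
  have h := (h₂.sub (h₁.const_mul (2 * c))).add_const (c ^ 2)
  have h0 : c ^ 2 - 2 * c * c + c ^ 2 = 0 := by ring
  rw [h0] at h
  refine h.congr' ?_
  filter_upwards [eventually_ge_atTop 1] with N hN
  have hN' : (N : ℝ) ≠ 0 := by positivity
  have : ∀ n, (u n - c) ^ 2 = u n ^ 2 - 2 * c * u n + c ^ 2 := fun n => by ring
  simp only [this, Finset.sum_add_distrib, Finset.sum_sub_distrib, ← Finset.mul_sum,
    Finset.sum_const, Finset.card_range, nsmul_eq_mul]
  field_simp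

theorem of_sq_le {u v w : ℕ → ℝ} {c d e K : ℝ} (hv : CesaroSq v d) (hw : CesaroSq w e)
    (h : ∀ n, (u n - c) ^ 2 ≤ K * (v n - d) ^ 2 + K * (w n - e) ^ 2) : CesaroSq u c := by
  have hlim := (hv.const_mul K).add (hw.const_mul K)
  simp only [mul_zero, add_zero] at hlim
  refine squeeze_zero (fun N => by positivity) (fun N => ?_) hlim
  have h' := Finset.sum_le_sum fun n (_ : n ∈ Finset.range N) => h n
  rw [Finset.sum_add_distrib, ← Finset.mul_sum, ← Finset.mul_sum] at h'
  calc _ ≤ (N : ℝ)⁻¹ * _ := mul_le_mul_of_nonneg_left h' (by positivity)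
    _ = _ := by ring

theorem add {u v : ℕ → ℝ} {c d : ℝ} (hu : CesaroSq u c) (hv : CesaroSq v d) :
    CesaroSq (fun n => u n + v n) (c + d) :=
  of_sq_le (K := 2) hu hv fun n => by nlinarith [sq_nonneg ((u n - c) - (v n - d))]

theorem sub {u v : ℕ → ℝ} {c d : ℝ} (hu : CesaroSq u c) (hv : CesaroSq v d) :
    CesaroSq (fun n => u n - v n) (c - d) :=
  of_sq_le (K := 2) hu hv fun n => by nlinarith [sq_nonneg ((u n - c) + (v n - d))]

theorem sum {ι : Type*} (s : Finset ι) {u : ι → ℕ → ℝ} {c : ι → ℝ}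
    (h : ∀ i ∈ s, CesaroSq (u i) (c i)) :
    CesaroSq (fun n => ∑ i ∈ s, u i n) (∑ i ∈ s, c i) := by
  classical
  induction s using Finset.induction_on with
  | empty => simpa using const 0
  | insert i s hi ih =>
    simp only [Finset.sum_insert hi]
    exact (h i (by simp)).add (ih fun j hj => h j (by simp [hj]))

theorem mul {u v : ℕ → ℝ} {c d : ℝ} (hu : CesaroSq u c) (hv : CesaroSq v d)
    (hv1 : ∀ n, |v n| ≤ 1) (hc1 : |c| ≤ 1) : CesaroSq (fun n => u n * v n) (c * d) := by
  refine of_sq_le (K := 2) hu hv fun n => ?_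
  have h1 : v n ^ 2 ≤ 1 := (sq_le_one_iff_abs_le_one _).2 (hv1 n)
  have h2 : c ^ 2 ≤ 1 := (sq_le_one_iff_abs_le_one _).2 hc1
  have h3 : u n * v n - c * d = (u n - c) * v n + c * (v n - d) := by ring
  have h4 := mul_le_mul_of_nonneg_left h1 (sq_nonneg (u n - c))
  have h5 := mul_le_mul_of_nonneg_left h2 (sq_nonneg (v n - d))
  rw [h3]
  nlinarith [sq_nonneg ((u n - c) * v n - c * (v n - d))]

theorem prod {ι : Type*} (s : Finset ι) {u : ι → ℕ → ℝ} {c : ι → ℝ}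
    (h : ∀ i ∈ s, CesaroSq (u i) (c i)) (hu : ∀ i ∈ s, ∀ n, |u i n| ≤ 1)
    (hc : ∀ i ∈ s, |c i| ≤ 1) :
    CesaroSq (fun n => ∏ i ∈ s, u i n) (∏ i ∈ s, c i) := by
  classical
  induction s using Finset.induction_on with
  | empty => simpa using const 1
  | insert i s hi ih =>
    simp only [Finset.prod_insert hi]
    refine (h i (by simp)).mul (ih (fun j hj => h j (by simp [hj]))
      (fun j hj => hu j (by simp [hj])) fun j hj => hc j (by simp [hj])) (fun n => ?_)
      (hc i (by simp))
    rw [Finset.abs_prod]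
    exact Finset.prod_le_one (fun _ _ => abs_nonneg _) fun j hj => hu j (by simp [hj]) n

theorem of_approx {u : ℕ → ℝ} {c : ℝ}
    (h : ∀ ε > 0, ∃ v d, CesaroSq v d ∧ (∀ n, |u n - v n| ≤ ε) ∧ |c - d| ≤ ε) :
    CesaroSq u c := by
  refine Metric.tendsto_atTop'.2 fun δ hδ => ?_
  obtain ⟨v, d, hv, huv, hcd⟩ := h (√(δ / 16)) (by positivity)
  obtain ⟨N₀, hN₀⟩ := Metric.tendsto_atTop'.1 hv (δ / 4) (by positivity)
  refine ⟨N₀, fun N hN => ?_⟩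
  have h1 := hN₀ N hN
  have hNpos : (0 : ℝ) < N := by exact_mod_cast (Nat.zero_le _).trans_lt hN
  rw [Real.dist_0_eq_abs, abs_of_nonneg (by positivity)] at h1 ⊢
  have hsq : √(δ / 16) ^ 2 = δ / 16 := Real.sq_sqrt (by positivity)
  have hpt : ∀ n, (u n - c) ^ 2 ≤ 2 * (v n - d) ^ 2 + δ / 2 := fun n => by
    have h2 := sq_le_sq' (abs_le.1 (huv n)).1 (abs_le.1 (huv n)).2
    have h3 := sq_le_sq' (abs_le.1 hcd).1 (abs_le.1 hcd).2
    rw [hsq] at h2 h3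
    have h4 : u n - c = (v n - d) + ((u n - v n) - (c - d)) := by ring
    rw [h4]
    nlinarith [sq_nonneg ((v n - d) - ((u n - v n) - (c - d))),
      sq_nonneg ((u n - v n) + (c - d))]
  have h5 := Finset.sum_le_sum fun n (_ : n ∈ Finset.range N) => hpt n
  rw [Finset.sum_add_distrib, ← Finset.mul_sum, Finset.sum_const, Finset.card_range,
    nsmul_eq_mul] at h5
  calc _ ≤ (N : ℝ)⁻¹ * _ := mul_le_mul_of_nonneg_left h5 (by positivity)
    _ = 2 * ((N : ℝ)⁻¹ * ∑ n ∈ Finset.range N, (v n - d) ^ 2) + δ / 2 := by field_simp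
    _ < δ := by linarith

end CesaroSq

/-- Mean square Cesàro convergence of a sequence of uniformly dominated measures extends from a
generating π-system to all measurable sets. -/
theorem cesaroSq_measureReal_of_piSystem {Ω : Type*} [mΩ : MeasurableSpace Ω]
    {C : Set (Set Ω)} (hgen : mΩ = MeasurableSpace.generateFrom C) (hpi : IsPiSystem C)
    {ν l : Measure Ω} [IsFiniteMeasure ν] {m : ℕ → Measure Ω} (hm : ∀ n, m n ≤ ν) (hl : l ≤ ν)
    (huniv : CesaroSq (fun n => (m n).real Set.univ) (l.real Set.univ))
    (hC : ∀ t ∈ C, CesaroSq (fun n => (m n).real t) (l.real t))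
    {t : Set Ω} (ht : MeasurableSet t) : CesaroSq (fun n => (m n).real t) (l.real t) := by
  have hmf : ∀ n, IsFiniteMeasure (m n) := fun n => isFiniteMeasure_of_le ν (hm n)
  have hlf : IsFiniteMeasure l := isFiniteMeasure_of_le ν hl
  induction t, ht using MeasurableSpace.induction_on_inter hgen hpi with
  | empty => simpa using CesaroSq.const 0
  | basic t ht => exact hC t ht
  | compl t ht ih =>
    simp only [measureReal_compl ht]
    exact huniv.sub ih
  | iUnion f hd hf ih =>
    refine CesaroSq.of_approx fun ε hε => ?_
    have hlim := tendsto_measure_biUnion_Ici_zero_of_pairwise_disjoint (μ := ν)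
      (fun i => (hf i).nullMeasurableSet) hd
    obtain ⟨k, hk⟩ := ((tendsto_order.1 hlim).2 (ENNReal.ofReal ε) (by simpa using hε)).exists
    have hk' : ν.real (⋃ i ≥ k, f i) ≤ ε :=
      ENNReal.toReal_le_of_le_ofReal hε.le hk.le
    have hdiff : ∀ ρ : Measure Ω, ρ ≤ ν →
        |ρ.real (⋃ i, f i) - ∑ i ∈ Finset.range k, ρ.real (f i)| ≤ ε := by
      intro ρ hρ
      have : IsFiniteMeasure ρ := isFiniteMeasure_of_le ν hρ
      have hsub : ⋃ i ∈ Finset.range k, f i ⊆ ⋃ i, f i :=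
        Set.iUnion₂_subset fun i _ => Set.subset_iUnion f i
      rw [← measureReal_biUnion_finset (fun i _ j _ hij => hd hij) fun i _ => hf i,
        ← measureReal_sdiff hsub (Finset.measurableSet_biUnion _ fun i _ => hf i),
        abs_of_nonneg measureReal_nonneg]
      refine le_trans ?_ hk'
      refine ENNReal.toReal_mono (measure_ne_top _ _) ((hρ _).trans (measure_mono ?_))
      rintro x ⟨hx, hx'⟩
      obtain ⟨i, hi⟩ := Set.mem_iUnion.1 hx
      simp only [Set.mem_iUnion, Finset.mem_range, not_exists] at hx' ⊢
      exact ⟨i, not_lt.1 fun h => hx' i h hi, hi⟩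
    exact ⟨_, _, CesaroSq.sum (Finset.range k) fun i _ => ih i, fun n => hdiff _ (hm n),
      hdiff _ hl⟩

/-- A transformation whose square is ergodic is weakly mixing: correlations of sets decay in mean
square. -/
theorem cesaroSq_of_ergodic_prodMap {X : Type*} [MeasurableSpace X] {T : X → X} {μ : Measure X}
    [IsProbabilityMeasure μ] (hwm : Ergodic (Prod.map T T) (μ.prod μ)) {A B : Set X}
    (hA : MeasurableSet A) (hB : MeasurableSet B) :
    CesaroSq (fun n => μ.real (T^[n] ⁻¹' A ∩ B)) (μ.real A * μ.real B) := by
  have hpre : ∀ (n : ℕ) (A' B' : Set X), ((Prod.map T T)^[n] ⁻¹' (A ×ˢ A')) ∩ (B ×ˢ B') =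
      (T^[n] ⁻¹' A ∩ B) ×ˢ (T^[n] ⁻¹' A' ∩ B') := fun n A' B' => by
    rw [Prod.map_iterate]
    ext x
    simp only [Set.mem_inter_iff, Set.mem_preimage, Set.mem_prod, Prod.map_fst, Prod.map_snd]
    tauto
  refine CesaroSq.of_average ?_ ?_
  · have h := tendsto_average_measureReal_inter hwm (hA.prod .univ) (hB.prod .univ)
    simpa only [hpre, measureReal_prod_prod, Set.preimage_univ, Set.inter_univ, probReal_univ,
      mul_one] using h
  · have h := tendsto_average_measureReal_inter hwm (hA.prod hA) (hB.prod hB)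
    simp only [hpre, measureReal_prod_prod, ← pow_two] at h
    convert h using 2
    ring

/-- Finite powers of a weakly mixing transformation are ergodic. -/
theorem ergodic_pi_of_ergodic_prodMap {X κ : Type*} [MeasurableSpace X] [Fintype κ] {T : X → X}
    {μ : Measure X} [IsProbabilityMeasure μ] (hT : MeasurePreserving T μ μ)
    (hwm : Ergodic (Prod.map T T) (μ.prod μ)) :
    Ergodic (fun (x : κ → X) k => T (x k)) (Measure.pi fun _ => μ) := by
  set S : (κ → X) → (κ → X) := fun x k => T (x k) with hSdef
  set m : Measure (κ → X) := Measure.pi fun _ => μ with hm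
  have hS : MeasurePreserving S m m := measurePreserving_pi _ _ fun _ => hT
  have hiter : ∀ n x k, S^[n] x k = T^[n] (x k) := by
    intro n
    induction n with
    | zero => simp
    | succ n ih => intro x k; rw [Function.iterate_succ_apply, ih, Function.iterate_succ_apply]
  have hbox : ∀ A B : κ → Set X, (∀ k, MeasurableSet (A k)) → (∀ k, MeasurableSet (B k)) →
      CesaroSq (fun n => m.real (S^[n] ⁻¹' (Set.univ.pi A) ∩ Set.univ.pi B))
        (m.real (Set.univ.pi A) * m.real (Set.univ.pi B)) := by
    intro A B hA hB
    have h1 : ∀ n, S^[n] ⁻¹' (Set.univ.pi A) ∩ Set.univ.pi B =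
        Set.univ.pi fun k => T^[n] ⁻¹' (A k) ∩ B k := fun n => by
      ext x
      simp only [Set.mem_inter_iff, Set.mem_preimage, Set.mem_univ_pi, hiter, forall_and]
    have h2 : ∀ A : κ → Set X, m.real (Set.univ.pi A) = ∏ k, μ.real (A k) := fun A => by
      simp [measureReal_def, hm, Measure.pi_pi, ENNReal.toReal_prod]
    simp only [h1, h2, ← Finset.prod_mul_distrib]
    have hle : ∀ A : Set X, |μ.real A| ≤ 1 := fun A => by
      rw [abs_of_nonneg measureReal_nonneg]; exact measureReal_le_one
    exact CesaroSq.prod _ (fun k _ => cesaroSq_of_ergodic_prodMap hwm (hA k) (hB k))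
      (fun k _ n => hle _) fun k _ => by
        rw [abs_mul]; exact mul_le_one₀ (hle _) (abs_nonneg _) (hle _)
  have hleft : ∀ (A : Set (κ → X)) (B : κ → Set X), MeasurableSet A →
      (∀ k, MeasurableSet (B k)) →
      CesaroSq (fun n => m.real (S^[n] ⁻¹' A ∩ Set.univ.pi B))
        (m.real A * m.real (Set.univ.pi B)) := by
    intro A B hA hB
    have hBm : MeasurableSet (Set.univ.pi B) := .univ_pi hB
    have hreal : ∀ n (D : Set (κ → X)), MeasurableSet D →
        ((m.restrict (Set.univ.pi B)).map S^[n]).real D = m.real (S^[n] ⁻¹' D ∩ Set.univ.pi B) :=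
      fun n D hD => by
        rw [map_measureReal_apply (hS.iterate n).measurable hD, measureReal_restrict_apply' hBm]
    have hreal' : ∀ D : Set (κ → X), (m (Set.univ.pi B) • m).real D =
        m.real D * m.real (Set.univ.pi B) := fun D => by
      rw [measureReal_ennreal_smul_apply, mul_comm]; rfl
    rw [← hreal']
    simp only [← hreal _ A hA]
    refine cesaroSq_measureReal_of_piSystem generateFrom_pi.symm isPiSystem_pi (ν := m)
      (fun n => ?_) ?_ ?_ ?_ hA
    · calc _ ≤ m.map S^[n] := Measure.map_mono Measure.restrict_le_self (hS.iterate n).measurable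
        _ = m := (hS.iterate n).map_eq
    · refine Measure.le_iff.2 fun s _ => ?_
      rw [Measure.smul_apply, smul_eq_mul]
      exact mul_le_of_le_one_left' prob_le_one
    · simp only [hreal _ _ MeasurableSet.univ, hreal', Set.preimage_univ, Set.univ_inter,
        probReal_univ, one_mul]
      exact CesaroSq.const _
    · rintro _ ⟨A, hA, rfl⟩
      have hA' : ∀ k, MeasurableSet (A k) := fun k => hA k trivial
      simp only [hreal _ _ (MeasurableSet.univ_pi hA'), hreal']
      exact hbox A B hA' hB
  have hall : ∀ A B : Set (κ → X), MeasurableSet A → MeasurableSet B →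
      CesaroSq (fun n => m.real (S^[n] ⁻¹' A ∩ B)) (m.real A * m.real B) := by
    intro A B hA hB
    have hreal : ∀ n (D : Set (κ → X)), MeasurableSet D →
        (m.restrict (S^[n] ⁻¹' A)).real D = m.real (S^[n] ⁻¹' A ∩ D) := fun n D hD => by
      rw [measureReal_restrict_apply hD, Set.inter_comm]
    have hreal' : ∀ D : Set (κ → X), (m A • m).real D = m.real A * m.real D := fun D => by
      rw [measureReal_ennreal_smul_apply]; rfl
    rw [← hreal']
    simp only [← hreal _ B hB]
    refine cesaroSq_measureReal_of_piSystem generateFrom_pi.symm isPiSystem_pi (ν := m)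
      (fun n => Measure.restrict_le_self) ?_ ?_ ?_ hB
    · refine Measure.le_iff.2 fun s _ => ?_
      rw [Measure.smul_apply, smul_eq_mul]
      exact mul_le_of_le_one_left' prob_le_one
    · simp only [hreal _ _ MeasurableSet.univ, hreal', Set.inter_univ, probReal_univ, mul_one,
        (hS.iterate _).measureReal_preimage hA.nullMeasurableSet]
      exact CesaroSq.const _
    · rintro _ ⟨B, hB, rfl⟩
      have hB' : ∀ k, MeasurableSet (B k) := fun k => hB k trivial
      simp only [hreal _ _ (MeasurableSet.univ_pi hB'), hreal']
      exact hleft A B hA hB'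
  refine ⟨hS, ⟨fun A hA hinv => ?_⟩⟩
  have h := hall A A hA hA
  have hit : ∀ n, S^[n] ⁻¹' A = A := fun n => by
    rw [Set.preimage_iterate_eq]; exact Function.iterate_fixed hinv n
  simp only [hit, Set.inter_self, CesaroSq] at h
  have h' : Tendsto (fun N : ℕ => (N : ℝ)⁻¹ *
      ∑ n ∈ Finset.range N, (m.real A - m.real A * m.real A) ^ 2) atTop
      (𝓝 ((m.real A - m.real A * m.real A) ^ 2)) := by
    refine tendsto_const_nhds.congr' ?_
    filter_upwards [eventually_ge_atTop 1] with N hN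
    have hN' : (N : ℝ) ≠ 0 := by positivity
    simp [hN']
  have h0 : m.real A * (1 - m.real A) = 0 := by
    have := pow_eq_zero_iff (two_ne_zero) |>.1 (tendsto_nhds_unique h' h)
    linarith
  rw [eventuallyConst_set']
  rcases mul_eq_zero.1 h0 with h0 | h0
  · left
    exact ae_eq_empty.2 ((measureReal_eq_zero_iff).1 h0)
  · right
    refine (prob_compl_eq_zero_iff hA |>.2 ?_) |> ae_eq_univ.2
    have : m.real A = 1 := by linarith
    rw [← ofReal_measureReal, this, ENNReal.ofReal_one]

/-- A measure on a product which is invariant under `id × S` and whose second marginal is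
`S`-ergodic is a product measure: the identity is disjoint from every ergodic system. -/
theorem eq_prod_of_ergodic_snd {Y Z : Type*} [MeasurableSpace Y] [MeasurableSpace Z] {S : Z → Z}
    {ρ : Measure (Y × Z)} [IsProbabilityMeasure ρ] {m : Measure Z} [IsProbabilityMeasure m]
    (hS : Ergodic S m) (hsnd : ρ.map Prod.snd = m)
    (hinv : MeasurePreserving (Prod.map id S) ρ ρ) :
    ρ = (ρ.map Prod.fst).prod m := by
  have : IsProbabilityMeasure (ρ.map Prod.fst) :=
    Measure.isProbabilityMeasure_map measurable_fst.aemeasurable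
  refine (Measure.prod_eq fun A C hA hC => ?_).symm
  set σ : Measure Z := (ρ.restrict (Prod.fst ⁻¹' A)).map Prod.snd with hσ
  have hσ_apply : ∀ D, MeasurableSet D → σ D = ρ (A ×ˢ D) := fun D hD => by
    rw [hσ, Measure.map_apply measurable_snd hD,
      Measure.restrict_apply (hD.preimage measurable_snd), Set.inter_comm, Set.prod_eq]
  have hσS : MeasurePreserving S σ σ := by
    refine ⟨hS.measurable, Measure.ext fun D hD => ?_⟩
    rw [Measure.map_apply hS.measurable hD, hσ_apply _ (hS.measurable hD), hσ_apply _ hD,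
      ← hinv.measure_preimage (hA.prod hD).nullMeasurableSet]
    rfl
  have hσm : σ ≪ m := by
    rw [← hsnd]
    exact (Measure.absolutelyContinuous_of_le Measure.restrict_le_self).map measurable_snd
  obtain ⟨c, hc⟩ := hS.eq_smul_of_absolutelyContinuous hσS hσm
  have hcA : c = ρ.map Prod.fst A := by
    have h := hσ_apply Set.univ .univ
    rw [hc, Measure.smul_apply, measure_univ, smul_eq_mul, mul_one, Set.prod_univ] at h
    rw [h, Measure.map_apply measurable_fst hA]
  rw [← hσ_apply C hC, hc, hcA, Measure.smul_apply, smul_eq_mul]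

/-- If the index set is split in two parts, `g` acts trivially on the first part and as a weakly
mixing transformation on each coordinate of the second part, then a `g`-invariant measure whose
two marginals are power measures is itself a power measure. -/
theorem eq_pi_of_split {X ι κ₀ κ₁ : Type*} [MeasurableSpace X] [Fintype ι] [Fintype κ₀]
    [Fintype κ₁] {T : X → X} {μ : Measure X} [IsProbabilityMeasure μ]
    (hT : MeasurePreserving T μ μ) (hwm : Ergodic (Prod.map T T) (μ.prod μ))
    {c₀ : κ₀ → ι} {c₁ : κ₁ → ι} (hbij : Function.Bijective (Sum.elim c₀ c₁))
    {ν : Measure (ι → X)} [IsProbabilityMeasure ν]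
    (h₀ : ν.map (fun x k => x (c₀ k)) = Measure.pi fun _ => μ)
    (h₁ : ν.map (fun x k => x (c₁ k)) = Measure.pi fun _ => μ)
    {g : (ι → X) → (ι → X)} (hg : MeasurePreserving g ν ν)
    (hg₀ : ∀ x k, g x (c₀ k) = x (c₀ k)) (hg₁ : ∀ x k, g x (c₁ k) = T (x (c₁ k))) :
    ν = Measure.pi fun _ => μ := by
  have hm₀ : Measurable fun (x : ι → X) k => x (c₀ k) := by fun_prop
  have hm₁ : Measurable fun (x : ι → X) k => x (c₁ k) := by fun_prop
  have hm := hm₀.prodMk hm₁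
  have hS : Ergodic (fun (x : κ₁ → X) k => T (x k)) (Measure.pi fun _ => μ) :=
    ergodic_pi_of_ergodic_prodMap hT hwm
  set ρ := ν.map fun x => (fun k => x (c₀ k), fun k => x (c₁ k)) with hρdef
  have : IsProbabilityMeasure ρ := Measure.isProbabilityMeasure_map hm.aemeasurable
  have hfst : ρ.map Prod.fst = Measure.pi fun _ => μ := by
    rw [hρdef, Measure.map_map measurable_fst hm, ← h₀]; rfl
  have hsnd : ρ.map Prod.snd = Measure.pi fun _ => μ := by
    rw [hρdef, Measure.map_map measurable_snd hm, ← h₁]; rfl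
  have hinv : MeasurePreserving (Prod.map id fun (x : κ₁ → X) k => T (x k)) ρ ρ := by
    refine ⟨measurable_id.prodMap hS.measurable, ?_⟩
    rw [hρdef, Measure.map_map (measurable_id.prodMap hS.measurable) hm]
    conv_rhs => rw [← hg.map_eq, Measure.map_map hm hg.measurable]
    congr 1
    ext x k <;> simp [hg₀, hg₁]
  have hρ := eq_prod_of_ergodic_snd hS hsnd hinv
  rw [hfst] at hρ
  refine (Measure.pi_eq fun s hs => ?_).symm
  have hpre : Set.univ.pi s = (fun x : ι → X => (fun k => x (c₀ k), fun k => x (c₁ k))) ⁻¹'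
      (Set.univ.pi (fun k => s (c₀ k)) ×ˢ Set.univ.pi fun k => s (c₁ k)) := by
    ext x
    simp only [Set.mem_univ_pi, Set.mem_preimage, Set.mem_prod]
    rw [hbij.surjective.forall, Sum.forall]
    rfl
  rw [hpre, ← Measure.map_apply hm
    ((MeasurableSet.univ_pi fun k => hs _).prod (MeasurableSet.univ_pi fun k => hs _)), ← hρdef,
    hρ, Measure.prod_prod, Measure.pi_pi, Measure.pi_pi, ← hbij.prod_comp, Fintype.prod_sum_type]
  rfl

/-- Invariance passes to factors. -/
theorem measurePreserving_map_of_semiconj {Y Z : Type*} [MeasurableSpace Y] [MeasurableSpace Z]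
    {ν : Measure Y} {g : Y → Y} {r : Y → Z} {g' : Z → Z} (hg : MeasurePreserving g ν ν)
    (hr : Measurable r) (hg' : Measurable g') (h : Function.Semiconj r g g') :
    MeasurePreserving g' (ν.map r) (ν.map r) := by
  refine ⟨hg', ?_⟩
  conv_rhs => rw [← hg.map_eq, Measure.map_map hr hg.measurable, h.comp_eq]
  rw [Measure.map_map hg' hr]

theorem faceHomeo_apply {X : Type*} [TopologicalSpace X] {T : X ≃ₜ X} {d : ℕ} (j : Fin d)
    (x : (Fin d → Bool) → X) (ε : Fin d → Bool) :
    faceHomeo T j x ε = if ε j then T (x ε) else x ε := by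
  change (if ε j then T else Homeomorph.refl X) (x ε) = _
  split_ifs <;> rfl

theorem faceHomeoStar_apply {X : Type*} [TopologicalSpace X] {T : X ≃ₜ X} {d : ℕ} (j : Fin d)
    (x : starIndex d → X) (ε : starIndex d) :
    faceHomeoStar T j x ε = if ε.1 j then T (x ε) else x ε := by
  change (if ε.1 j then T else Homeomorph.refl X) (x ε) = _
  split_ifs <;> rfl

theorem measurePreserving_ite {X : Type*} [TopologicalSpace X] [MeasurableSpace X] {T : X ≃ₜ X}
    {μ : Measure X} (hT : MeasurePreserving T μ μ) (b : Bool) :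
    MeasurePreserving (if b then T else Homeomorph.refl X : X ≃ₜ X) μ μ := by
  cases b
  · exact MeasurePreserving.id μ
  · exact hT

theorem bijective_cons (d : ℕ) : Function.Bijective (Sum.elim
    (fun ε : Fin d → Bool => (Fin.cons false ε : Fin (d + 1) → Bool)) fun ε => Fin.cons true ε) := by
  constructor
  · rintro (a | a) (b | b) h <;> simp_all [Fin.cons_inj]
  · intro ε
    cases h : ε 0
    · exact ⟨.inl (Fin.tail ε), by simp [← h]⟩
    · exact ⟨.inr (Fin.tail ε), by simp [← h]⟩

/-- The inclusion of nonzero indices as the face `ε 0 = 0`. -/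
def starConsFalse {d : ℕ} (ε : starIndex d) : starIndex (d + 1) :=
  ⟨Fin.cons false ε.1, fun h => ε.2 <| by
    ext i
    simpa using congrFun h i.succ⟩

/-- The inclusion of all indices as the face `ε 0 = 1`. -/
def starConsTrue {d : ℕ} (ε : Fin d → Bool) : starIndex (d + 1) :=
  ⟨Fin.cons true ε, fun h => by simpa using congrFun h 0⟩

theorem starConsFalse_val {d : ℕ} (ε : starIndex d) :
    (starConsFalse ε).1 = Fin.cons false ε.1 := rfl

theorem starConsTrue_val {d : ℕ} (ε : Fin d → Bool) :
    (starConsTrue ε).1 = Fin.cons true ε := rfl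

theorem bijective_starCons (d : ℕ) :
    Function.Bijective (Sum.elim (starConsFalse (d := d)) starConsTrue) := by
  constructor
  · refine Function.Injective.of_comp (f := Subtype.val) ?_
    have h := (bijective_cons d).injective.comp
      ((Subtype.val_injective (p := fun ε : Fin d → Bool => ε ≠ fun _ => false)).sumMap
        Function.injective_id)
    convert! h using 1
    ext (ε | ε) <;> rfl
  · rintro ⟨ε, hε⟩
    obtain ⟨a | a, rfl⟩ := (bijective_cons d).surjective ε
    · refine ⟨.inl ⟨a, fun h => hε ?_⟩, rfl⟩
      ext i
      refine Fin.cases rfl (fun i => ?_) i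
      exact congrFun h i
    · exact ⟨.inr a, rfl⟩

theorem measurePreserving_parallelepipedGens {X : Type*} [TopologicalSpace X] [MeasurableSpace X]
    {T : X ≃ₜ X} {μ : Measure X} [IsProbabilityMeasure μ] (hT : MeasurePreserving T μ μ) {d : ℕ}
    {g : ((Fin d → Bool) → X) ≃ₜ ((Fin d → Bool) → X)} (hg : g ∈ parallelepipedGens T d) :
    MeasurePreserving g (Measure.pi fun _ => μ) (Measure.pi fun _ => μ) := by
  rcases hg with rfl | ⟨j, rfl⟩
  · exact measurePreserving_pi _ _ fun _ => hT
  · exact measurePreserving_pi _ _ fun ε => measurePreserving_ite hT (ε j)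

theorem measurePreserving_faceGensStar {X : Type*} [TopologicalSpace X] [MeasurableSpace X]
    {T : X ≃ₜ X} {μ : Measure X} [IsProbabilityMeasure μ] (hT : MeasurePreserving T μ μ) {d : ℕ}
    {g : (starIndex d → X) ≃ₜ (starIndex d → X)} (hg : g ∈ faceGensStar T d) :
    MeasurePreserving g (Measure.pi fun _ => μ) (Measure.pi fun _ => μ) := by
  rcases hg with ⟨j, rfl⟩
  exact measurePreserving_pi _ _ fun ε => measurePreserving_ite hT (ε.1 j)

section Faces

variable {X : Type*} [MetricSpace X] [CompactSpace X] [MeasurableSpace X] [BorelSpace X]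
  {T : X ≃ₜ X} {μ : Measure X}

/-- A transformation acting on a subcube as a face transformation induces a
face-invariant marginal on that subcube. -/
theorem measurePreserving_map_face {ι : Type*} {d : ℕ} {ν : Measure (ι → X)}
    {G : (ι → X) → (ι → X)} (hG : MeasurePreserving G ν ν) {c : (Fin d → Bool) → ι} {j : Fin d}
    (h : ∀ x ε, G x (c ε) = if ε j then T (x (c ε)) else x (c ε)) :
    MeasurePreserving (faceHomeo T j) (ν.map fun x ε => x (c ε)) (ν.map fun x ε => x (c ε)) := by
  refine measurePreserving_map_of_semiconj hG (by fun_prop) (faceHomeo T j).measurable fun x => ?_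
  ext ε
  rw [h, faceHomeo_apply]

theorem measurePreserving_map_diag {ι : Type*} {d : ℕ} {ν : Measure (ι → X)}
    {G : (ι → X) → (ι → X)} (hG : MeasurePreserving G ν ν) {c : (Fin d → Bool) → ι}
    (h : ∀ x ε, G x (c ε) = T (x (c ε))) :
    MeasurePreserving (diagHomeo T d) (ν.map fun x ε => x (c ε)) (ν.map fun x ε => x (c ε)) :=
  measurePreserving_map_of_semiconj hG (by fun_prop) (diagHomeo T d).measurable fun x =>
    funext fun ε => h x ε

variable [IsProbabilityMeasure μ]

/-- Unique ergodicity of the parallelepiped group action. -/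
theorem eq_pi_of_parallelepipedGens (hT : MeasurePreserving T μ μ)
    (huniq : ∀ ν : Measure X, IsProbabilityMeasure ν → MeasurePreserving T ν ν → ν = μ)
    (hwm : Ergodic (Prod.map T T) (μ.prod μ)) (d : ℕ) (ν : Measure ((Fin d → Bool) → X))
    [IsProbabilityMeasure ν] (hν : ∀ g ∈ parallelepipedGens T d, MeasurePreserving g ν ν) :
    ν = Measure.pi fun _ => μ := by
  induction d with
  | zero =>
    have hdiag := hν (diagHomeo T 0) (Set.mem_insert _ _)
    let ε₀ : Fin 0 → Bool := fun _ => false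
    have hev : Measurable fun x : (Fin 0 → Bool) → X => x ε₀ := by fun_prop
    have hμ : ν.map (fun x => x ε₀) = μ :=
      huniq _ (Measure.isProbabilityMeasure_map hev.aemeasurable)
        (measurePreserving_map_of_semiconj hdiag hev T.measurable fun _ => rfl)
    refine (Measure.pi_eq fun s hs => ?_).symm
    rw [Fintype.prod_subsingleton _ ε₀, ← hμ, Measure.map_apply hev (hs _)]
    congr 1
    ext x
    simp only [Set.mem_univ_pi, Set.mem_preimage]
    exact ⟨fun h => h ε₀, fun h i => Subsingleton.elim ε₀ i ▸ h⟩
  | succ d ih =>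
    have hdiag := hν (diagHomeo T (d + 1)) (Set.mem_insert _ _)
    have hface : ∀ j, MeasurePreserving (faceHomeo T j) ν ν := fun j =>
      hν _ (Set.mem_insert_of_mem _ ⟨j, rfl⟩)
    have hmarg : ∀ b : Bool, ν.map (fun x (ε : Fin d → Bool) => x (Fin.cons b ε)) =
        Measure.pi fun _ => μ := fun b => by
      have hm : Measurable fun (x : (Fin (d + 1) → Bool) → X) (ε : Fin d → Bool) =>
        x (Fin.cons b ε) := by fun_prop
      have := Measure.isProbabilityMeasure_map (μ := ν) hm.aemeasurable
      refine ih _ ?_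
      rintro _ (rfl | ⟨j, rfl⟩)
      · exact measurePreserving_map_diag hdiag fun _ _ => rfl
      · exact measurePreserving_map_face (hface j.succ) fun x ε => by
          rw [faceHomeo_apply, Fin.cons_succ]
    exact eq_pi_of_split hT hwm (bijective_cons d) (hmarg false) (hmarg true) (hface 0)
      (fun x ε => by simp [faceHomeo_apply]) fun x ε => by simp [faceHomeo_apply]

/-- Unique ergodicity of the face group action on the nonzero coordinates. -/
theorem eq_pi_of_faceGensStar (hT : MeasurePreserving T μ μ)
    (huniq : ∀ ν : Measure X, IsProbabilityMeasure ν → MeasurePreserving T ν ν → ν = μ)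
    (hwm : Ergodic (Prod.map T T) (μ.prod μ)) (d : ℕ) (ν : Measure (starIndex d → X))
    [IsProbabilityMeasure ν] (hν : ∀ g ∈ faceGensStar T d, MeasurePreserving g ν ν) :
    ν = Measure.pi fun _ => μ := by
  induction d with
  | zero =>
    have : IsEmpty (starIndex 0) := ⟨fun ε => ε.2 (Subsingleton.elim _ _)⟩
    refine (Measure.pi_eq fun s hs => ?_).symm
    have hs : Set.univ.pi s = Set.univ := Set.eq_univ_of_forall fun _ => by simp
    simp [hs]
  | succ d ih =>
    have hface : ∀ j, MeasurePreserving (faceHomeoStar T j) ν ν := fun j => hν _ ⟨j, rfl⟩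
    have h₀ : ν.map (fun x ε => x (starConsFalse (d := d) ε)) = Measure.pi fun _ => μ := by
      have hm : Measurable fun (x : starIndex (d + 1) → X) ε =>
        x (starConsFalse (d := d) ε) := by fun_prop
      have := Measure.isProbabilityMeasure_map (μ := ν) hm.aemeasurable
      refine ih _ ?_
      rintro _ ⟨j, rfl⟩
      refine measurePreserving_map_of_semiconj (hface j.succ) hm (faceHomeoStar T j).measurable
        fun x => ?_
      ext ε
      simp only [faceHomeoStar_apply, starConsFalse_val, Fin.cons_succ]
    have h₁ : ν.map (fun x ε => x (starConsTrue (d := d) ε)) = Measure.pi fun _ => μ := by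
      have hm : Measurable fun (x : starIndex (d + 1) → X) ε =>
        x (starConsTrue (d := d) ε) := by fun_prop
      have := Measure.isProbabilityMeasure_map (μ := ν) hm.aemeasurable
      refine eq_pi_of_parallelepipedGens hT huniq hwm d _ ?_
      rintro _ (rfl | ⟨j, rfl⟩)
      · exact measurePreserving_map_diag (hface 0) fun x ε => by
          simp [faceHomeoStar_apply, starConsTrue_val]
      · exact measurePreserving_map_face (hface j.succ) fun x ε => by
          simp only [faceHomeoStar_apply, starConsTrue_val, Fin.cons_succ]
    exact eq_pi_of_split hT hwm (bijective_starCons d) h₀ h₁ (hface 0)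
      (fun x ε => by simp [faceHomeoStar_apply, starConsFalse_val]) fun x ε => by
        simp [faceHomeoStar_apply, starConsTrue_val]

end Faces

/-- **Proposition (weakly mixing systems).** Let `(X, T)` be a uniquely ergodic t.d.s. whose
unique invariant measure `μ` is weakly mixing. Then (1) the parallelepiped group `G^[d]`
acting on `X^[d]` is uniquely ergodic with unique invariant measure the `2^d`-fold product
of `μ`, and (2) the face group `F^[d]` acting on `X^[d]_*` is uniquely ergodic with unique
invariant measure the `(2^d - 1)`-fold product of `μ`. -/
theorem prop_weakMixing_faces {X : Type*} [MetricSpace X] [CompactSpace X]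
    [MeasurableSpace X] [BorelSpace X] (T : X ≃ₜ X)
    (μ : Measure X) [IsProbabilityMeasure μ] (hinv : MeasurePreserving T μ μ)
    (huniq : ∀ ν : Measure X, IsProbabilityMeasure ν → MeasurePreserving T ν ν → ν = μ)
    (hwm : Ergodic (Prod.map T T) (μ.prod μ)) (d : ℕ) (hd : 1 ≤ d) :
    ((∀ g ∈ parallelepipedGens T d,
        MeasurePreserving g (Measure.pi fun _ : Fin d → Bool => μ) (Measure.pi fun _ => μ)) ∧
      (∀ ν : Measure ((Fin d → Bool) → X), IsProbabilityMeasure ν →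
        (∀ g ∈ parallelepipedGens T d, MeasurePreserving g ν ν) →
        ν = Measure.pi fun _ => μ)) ∧
    ((∀ g ∈ faceGensStar T d,
        MeasurePreserving g (Measure.pi fun _ : starIndex d => μ) (Measure.pi fun _ => μ)) ∧
      (∀ ν : Measure (starIndex d → X), IsProbabilityMeasure ν →
        (∀ g ∈ faceGensStar T d, MeasurePreserving g ν ν) →
        ν = Measure.pi fun _ => μ)) := by
  refine ⟨⟨fun g hg => measurePreserving_parallelepipedGens hinv hg, fun ν _ hν =>
      eq_pi_of_parallelepipedGens hinv huniq hwm d ν hν⟩,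
    fun g hg => measurePreserving_faceGensStar hinv hg, fun ν _ hν =>
      eq_pi_of_faceGensStar hinv huniq hwm d ν hν⟩

end HSY
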